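/- Let G be a finite simple nonbipartite cubic (3-regular) graph, and let ν = |E(G)| − c, where c is the maximum number of edges in a cut of G (so that removing from G the ν edges not in a maximum cut, which form a matching, leaves a bipartite graph). Then for all sufficiently large n, ex({M(G)}, n) = 2^{n−1} + 2^{ν−1} − 1. -/

import Mathlib

open scoped Classical

/-- `M` has an `N`-restriction: some injective linear image of `N` lies inside `M`. -/
def HasRestriction {α β : Type*} [AddCommMonoid α] [AddCommMonoid β]
    [Module (ZMod 2) α] [Module (ZMod 2) β] (N : Set α) (M : Set β) : Prop :=
  ∃ ψ : α →ₗ[ZMod 2] β, Function.Injective ψ ∧ ψ '' N ⊆ M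

/-- The set of distinct `N`-restrictions of `M` (as subsets of `M`). -/
def restrictionSet {α β : Type*} [AddCommMonoid α] [AddCommMonoid β]
    [Module (ZMod 2) α] [Module (ZMod 2) β] (N : Set α) (M : Set β) : Set (Set β) :=
  {S | S ⊆ M ∧ ∃ ψ : α →ₗ[ZMod 2] β, Function.Injective ψ ∧ S = ψ '' N}

/-- The Turán number for a single excluded matroid `N`. -/
noncomputable def exNum {α : Type*} [AddCommMonoid α] [Module (ZMod 2) α] (N : Set α) (n : ℕ) : ℕ :=
  sSup {m | ∃ M : Set (Fin n → ZMod 2), 0 ∉ M ∧ ¬ HasRestriction N M ∧ M.ncard = m}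

/-- The Turán number for a family of excluded matroids. -/
noncomputable def exNumFam (𝒩 : Set (Σ k : ℕ, Set (Fin k → ZMod 2))) (n : ℕ) : ℕ :=
  sSup {m | ∃ M : Set (Fin n → ZMod 2), 0 ∉ M ∧
    (∀ N ∈ 𝒩, ¬ HasRestriction N.2 M) ∧ M.ncard = m}

/-- The critical number of `M ⊆ 𝔽₂ⁿ`. -/
noncomputable def critNum {n : ℕ} (M : Set (Fin n → ZMod 2)) : ℕ :=
  sInf {c | ∃ φ : (Fin n → ZMod 2) →ₗ[ZMod 2] (Fin c → ZMod 2), ∀ x ∈ M, φ x ≠ 0}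

/-- The rank of `M`: dimension of its span. -/
noncomputable def rankM {n : ℕ} (M : Set (Fin n → ZMod 2)) : ℕ :=
  Module.finrank (ZMod 2) (Submodule.span (ZMod 2) M)

/-- `M` is a copy of `N^{n,t}`. -/
def IsCopyNnt {d : ℕ} (N : Set (Fin d → ZMod 2)) (n t : ℕ)
    (M : Set (Fin n → ZMod 2)) : Prop :=
  ∃ F : Submodule (ZMod 2) (Fin n → ZMod 2), Module.finrank (ZMod 2) F = n - t ∧
    ∃ θ : (Fin d → ZMod 2) →ₗ[ZMod 2] (Fin n → ZMod 2),
      Function.Injective θ ∧ (∀ x, θ x ∈ F) ∧ M = θ '' N ∪ {x | x ∉ F}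

/-- The decomposition family `𝒟(𝒩)`. -/
def decompFam (𝒩 : Set (Σ k : ℕ, Set (Fin k → ZMod 2))) (k : ℕ) :
    Set (Σ k : ℕ, Set (Fin k → ZMod 2)) :=
  {D | 0 ∉ D.2 ∧
    (∃ N ∈ 𝒩, ∃ M : Set (Fin N.1 → ZMod 2), IsCopyNnt D.2 N.1 k M ∧ HasRestriction N.2 M) ∧
    ∀ D' : Σ k : ℕ, Set (Fin k → ZMod 2), 0 ∉ D'.2 →
      (∃ N ∈ 𝒩, ∃ M : Set (Fin N.1 → ZMod 2), IsCopyNnt D'.2 N.1 k M ∧ HasRestriction N.2 M) →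
      HasRestriction D'.2 D.2 → HasRestriction D.2 D'.2}

/-- The cycle matroid of a simple graph. -/
def cycleMatroid {V : Type*} [DecidableEq V] (G : SimpleGraph V) : Set (V → ZMod 2) :=
  {x | ∃ u v, G.Adj u v ∧ x = Pi.single u 1 + Pi.single v 1}

section AddPart

lemma hasRestr_of_indep {V X : Type*} [Fintype V] [DecidableEq V] [AddCommGroup X]
    [Module (ZMod 2) X] (G : SimpleGraph V) (M : Set X) (x : V → X)
    (hx : ∀ c : V → ZMod 2, ∑ v, c v • x v = 0 → c = 0)
    (hM : ∀ u v, G.Adj u v → x u + x v ∈ M) : HasRestriction (cycleMatroid G) M := by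
  refine ⟨Fintype.linearCombination (ZMod 2) x, ?_, ?_⟩
  · rw [injective_iff_map_eq_zero]
    intro c hc
    apply hx
    simpa [Fintype.linearCombination_apply] using hc
  · rintro _ ⟨_, ⟨u, v, huv, rfl⟩, rfl⟩
    have := hM u v huv
    simpa [Fintype.linearCombination_apply_single] using this

lemma fiber_ncard {V W : Type*} [Fintype V] [AddCommGroup W] [Module (ZMod 2) W] [Finite W]
    (d : V → ZMod 2) (hd : d ≠ 0) (B : Set W) :
    {w : V → W | ∑ i, d i • w i ∈ B}.ncard * Nat.card W = B.ncard * Nat.card W ^ Fintype.card V := by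
  have := Fintype.ofFinite W
  obtain ⟨i₀, hi₀⟩ := Function.ne_iff.mp hd
  have h1 : d i₀ = 1 := by
    have : ∀ z : ZMod 2, z ≠ 0 → z = 1 := by decide
    exact this _ hi₀
  let φ : (V → W) →ₗ[ZMod 2] W := ∑ i, d i • LinearMap.proj i
  have hφ : ∀ w, φ w = ∑ i, d i • w i := by intro w; simp [φ]
  have hs : Function.Surjective φ := by
    intro b
    refine ⟨Pi.single i₀ b, ?_⟩
    rw [hφ, Finset.sum_eq_single i₀]
    · simp [h1]
    · intro j _ hj; simp [Pi.single_eq_of_ne hj]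
    · simp
  have key : ∀ b : W, (Finset.univ.filter fun w => φ w = b).card
      = (Finset.univ.filter fun w => φ w = 0).card := by
    intro b
    obtain ⟨w0, rfl⟩ := hs b
    refine Finset.card_bij (fun w _ => w - w0) ?_ ?_ ?_
    · intro w hw; simp at hw ⊢; rw [hw]; simp
    · intro a _ b _ h; simpa using h
    · intro w hw
      refine ⟨w + w0, ?_, by simp⟩
      simp at hw ⊢; exact hw
  set κ := (Finset.univ.filter fun w => φ w = 0).card
  have hB : ∀ B : Finset W, (Finset.univ.filter fun w => φ w ∈ B).card = B.card * κ := by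
    intro B
    rw [Finset.card_eq_sum_card_fiberwise (f := φ) (t := B)]
    · rw [Finset.sum_congr rfl (g := fun _ => κ)]
      · simp
      · intro b hb
        rw [← key b]
        congr 1
        ext w
        simp only [Finset.mem_filter, Finset.mem_univ, true_and]
        constructor
        · rintro ⟨_, h⟩; exact h
        · rintro rfl; exact ⟨hb, rfl⟩
    · intro w hw; simpa using hw
  have hu := hB Finset.univ
  simp at hu
  have hb := hB B.toFinset
  have e : {w : V → W | ∑ i, d i • w i ∈ B}.ncard = (Finset.univ.filter fun w => φ w ∈ B.toFinset).card := by
    rw [← Set.ncard_coe_finset]; congr 1; ext w; simp [hφ]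
  rw [e, hb, Nat.card_eq_fintype_card, hu, Set.ncard_eq_toFinset_card']
  ring

lemma embed {V X : Type*} [Fintype V] [DecidableEq V] [AddCommGroup X] [Finite X]
    [Module (ZMod 2) X] (G : SimpleGraph V) (M : Set X) (W : Submodule (ZMod 2) X)
    (r : V → V) (p : V → X) (δ : ℝ)
    (h1 : ∀ u v, G.Adj u v → (r u = r v ∧ p u + p v ∈ M) ∨
      (r u ≠ r v ∧ ({y : W | p u + p v + y ∉ M}.ncard : ℝ) ≤ δ * Nat.card W))
    (h2 : ∀ c : V → ZMod 2, (∀ ρ, ∑ v with r v = ρ, c v = 0) → ∑ v, c v • p v = 0 → c = 0)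
    (hδ : 0 ≤ δ)
    (h3 : (Fintype.card V : ℝ) ^ 2 * δ + 2 ^ Fintype.card V / Nat.card W < 1) :
    HasRestriction (cycleMatroid G) M := by
  have := Fintype.ofFinite W
  have hz2 : ∀ x : X, x + x = 0 := by
    intro x; rw [← two_smul (ZMod 2) x, show (2 : ZMod 2) = 0 from rfl, zero_smul]
  have hWpos : 0 < (Nat.card W : ℝ) := by exact_mod_cast Nat.card_pos
  set N : ℝ := (Nat.card W : ℝ) with hN
  set k := Fintype.card V with hk
  by_contra hno
  let Bd : V × V → Finset (V → W) := fun q => Finset.univ.filter fun w =>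
    (r q.1 ≠ r q.2 ∧ ({y : W | p q.1 + p q.2 + y ∉ M}.ncard : ℝ) ≤ δ * N) ∧
      p q.1 + p q.2 + ((w (r q.1) + w (r q.2) : W) : X) ∉ M
  let Dg : (V → ZMod 2) → Finset (V → W) := fun c => Finset.univ.filter fun w =>
    c ≠ 0 ∧ ∑ v, c v • (p v + (w (r v) : X)) = 0
  have cover : (Finset.univ : Finset (V → W)) ⊆ Finset.univ.biUnion Bd ∪ Finset.univ.biUnion Dg := by
    intro w _
    by_contra hw
    apply hno
    simp only [Finset.mem_union, Finset.mem_biUnion, Finset.mem_univ, true_and, not_or,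
      not_exists, Bd, Dg, Finset.mem_filter, not_and] at hw
    refine hasRestr_of_indep G M (fun v => p v + (w (r v) : X)) ?_ ?_
    · intro c hc
      by_contra hc0
      exact hw.2 c hc0 hc
    · intro u v huv
      rcases h1 u v huv with ⟨hr, hm⟩ | ⟨hr, hm⟩
      · have : p u + ↑(w (r u)) + (p v + ↑(w (r v))) = p u + p v := by
          rw [hr]
          rw [show p u + ↑(w (r v)) + (p v + ↑(w (r v))) = p u + p v + ((w (r v) : X) + w (r v)) by abel,
            hz2, add_zero]
        simpa [this] using hm
      · have := not_not.mp (hw.1 (u, v) ⟨hr, hm⟩)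
        rw [show p u + (w (r u) : X) + (p v + ↑(w (r v))) = p u + p v + ((w (r u) + w (r v) : W) : X) by
          push_cast; abel]
        exact this
  have hBd : ∀ q, ((Bd q).card : ℝ) ≤ δ * N ^ k := by
    intro q
    by_cases hq : r q.1 ≠ r q.2 ∧ ({y : W | p q.1 + p q.2 + y ∉ M}.ncard : ℝ) ≤ δ * N
    · have hf := fiber_ncard (V := V) (W := W) (Pi.single (r q.1) 1 + Pi.single (r q.2) 1) (by
        intro h
        have := congrFun h (r q.1)
        simp [Pi.single_eq_of_ne hq.1] at this) {y : W | p q.1 + p q.2 + y ∉ M}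
      have e : (Bd q).card = {w : V → W | ∑ i, (Pi.single (r q.1) 1 + Pi.single (r q.2) 1 : V → ZMod 2) i • w i
          ∈ {y : W | p q.1 + p q.2 + y ∉ M}}.ncard := by
        rw [← Set.ncard_coe_finset]; congr 1; ext w
        simp [Bd, hq.1, add_smul, Finset.sum_add_distrib, Pi.single_apply, ite_smul]
        intro _
        simpa [hN] using hq.2
      rw [← e] at hf
      have hf' : ((Bd q).card : ℝ) * N = ({y : W | p q.1 + p q.2 + y ∉ M}.ncard : ℝ) * N ^ k := by
        rw [hN, hk]; exact_mod_cast hf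
      have : ((Bd q).card : ℝ) * N ≤ (δ * N ^ k) * N := by
        rw [hf']
        calc _ ≤ δ * N * N ^ k := by gcongr; exact hq.2
          _ = _ := by ring
      exact le_of_mul_le_mul_right this hWpos
    · have : Bd q = ∅ := by
        ext w; simp only [Bd, Finset.mem_filter]; tauto
      rw [this]; simp; positivity
  have hDg : ∀ c, ((Dg c).card : ℝ) ≤ N ^ k / N := by
    intro c
    by_cases hne : (Dg c).Nonempty
    swap
    · rw [Finset.not_nonempty_iff_eq_empty.mp hne]; simp; positivity
    obtain ⟨w0, hw0⟩ := hne
    simp only [Dg, Finset.mem_filter, Finset.mem_univ, true_and] at hw0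
    let d : V → ZMod 2 := fun ρ => ∑ v with r v = ρ, c v
    have hsum : ∀ w : V → W, ∑ i, d i • w i = ∑ v, c v • w (r v) := by
      intro w
      simp only [d, Finset.sum_smul]
      rw [← Finset.sum_fiberwise (s := Finset.univ) (g := r) (f := fun v => c v • w (r v))]
      refine Finset.sum_congr rfl fun i _ => Finset.sum_congr rfl fun v hv => ?_
      simp at hv; rw [hv]
    have hsum2 : ∀ w : V → W, ∑ v, c v • (p v + (w (r v) : X)) = ∑ v, c v • p v + ((∑ i, d i • w i : W) : X) := by
      intro w
      rw [hsum]
      simp [Finset.sum_add_distrib]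
    have hd : d ≠ 0 := by
      intro hd
      apply hw0.1
      apply h2 c (fun ρ => congrFun hd ρ)
      have := hw0.2
      rw [hsum2] at this
      simpa [hd] using this
    have hf := fiber_ncard d hd {y : W | ∑ v, c v • p v + (y : X) = 0}
    have e : (Dg c).card = {w : V → W | ∑ i, d i • w i ∈ {y : W | ∑ v, c v • p v + (y : X) = 0}}.ncard := by
      rw [← Set.ncard_coe_finset]; congr 1; ext w
      simp only [Dg, Finset.coe_filter, Finset.mem_univ, true_and, Set.mem_ofPred_eq, hsum2, hw0.1, ne_eq, not_false_iff]
    have h1 : {y : W | ∑ v, c v • p v + (y : X) = 0}.ncard ≤ 1 := by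
      rw [Set.ncard_le_one]
      intro a ha b hb
      simp only [Set.mem_ofPred_eq] at ha hb
      exact Subtype.ext (add_left_cancel (ha.trans hb.symm))
    rw [← e] at hf
    have hf' : ((Dg c).card : ℝ) * N = ({y : W | ∑ v, c v • p v + (y : X) = 0}.ncard : ℝ) * N ^ k := by
      rw [hN, hk]; exact_mod_cast hf
    rw [le_div_iff₀ hWpos, hf']
    have h1' : ({y : W | ∑ v, c v • p v + (y : X) = 0}.ncard : ℝ) ≤ 1 := by exact_mod_cast h1
    calc _ ≤ 1 * N ^ k := by gcongr
      _ = _ := one_mul _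
  have hcard : ((Finset.univ : Finset (V → W)).card : ℝ) = N ^ k := by
    rw [Finset.card_univ, Fintype.card_fun, hN, Nat.card_eq_fintype_card]; push_cast; rfl
  have := Finset.card_le_card cover
  have h4 : ((Finset.univ : Finset (V → W)).card : ℝ) ≤ ∑ q, ((Bd q).card : ℝ) + ∑ c, ((Dg c).card : ℝ) := by
    have := (this.trans (Finset.card_union_le _ _)).trans
      (add_le_add (Finset.card_biUnion_le) (Finset.card_biUnion_le))
    exact_mod_cast this
  rw [hcard] at h4
  have h5 : ∑ q, ((Bd q).card : ℝ) ≤ k ^ 2 * (δ * N ^ k) := by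
    refine (Finset.sum_le_sum fun q _ => hBd q).trans ?_
    simp [hk, sq]
  have h6 : ∑ c, ((Dg c).card : ℝ) ≤ 2 ^ k * (N ^ k / N) := by
    refine (Finset.sum_le_sum fun q _ => hDg q).trans ?_
    simp [hk]
  have h7 : N ^ k ≤ (k ^ 2 * δ + 2 ^ k / N) * N ^ k := by
    calc _ ≤ _ := h4
      _ ≤ _ := add_le_add h5 h6
      _ = _ := by ring
  have : 0 < N ^ k := by positivity
  nlinarith

end AddPart

section Stab

lemma sum_shift {X : Type*} [AddCommGroup X] [Fintype X] (A B : Finset X) :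
    ∑ d, (A.filter fun a => d + a ∈ B).card = A.card * B.card := by
  simp only [Finset.card_filter]
  rw [Finset.sum_comm]
  rw [Finset.sum_congr rfl (g := fun _ => B.card)]
  · simp
  · intro a _
    rw [← Finset.card_filter]
    refine Finset.card_bij (fun d _ => d + a) ?_ ?_ ?_
    · intro d hd; simpa using hd
    · intro d _ d' _ h; simpa using h
    · intro b hb; exact ⟨b - a, by simpa using hb, by simp⟩

lemma zmod_two_cases : ∀ z : ZMod 2, z = 0 ∨ z = 1 := by decide

lemma flat_aux (t : ℕ) : ∀ ε : ℝ, 0 < ε → ∃ η : ℝ, 0 < η ∧ ∃ N0 : ℕ,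
    ∀ (X : Type) [AddCommGroup X] [Module (ZMod 2) X] [Finite X], N0 ≤ Nat.card X →
    ∀ A : Set X, ε * Nat.card X ≤ A.ncard →
    ∃ W : Submodule (ZMod 2) X, Module.finrank (ZMod 2) W = t ∧
      η * Nat.card X ≤ {a | ∀ w ∈ W, a + w ∈ A}.ncard := by
  intro ε hε
  induction t with
  | zero =>
    refine ⟨ε, hε, 0, fun X _ _ _ _ A hA => ⟨⊥, by simp, by simpa using hA⟩⟩
  | succ t ih =>
    obtain ⟨η, hη, N0, h⟩ := ih
    refine ⟨η ^ 2 / 2, by positivity, max N0 (⌈2 ^ (t + 1) / η ^ 2⌉₊ + 1), ?_⟩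
    intro X _ _ _ hX A hA
    obtain ⟨W, hW, hc⟩ := h X (le_trans (le_max_left _ _) hX) A hA
    have hX2 : 2 ^ (t + 1) / η ^ 2 < (Nat.card X : ℝ) := by
      refine lt_of_le_of_lt (Nat.le_ceil _) ?_
      have := le_trans (le_max_right _ _) hX
      exact_mod_cast this
    have := Fintype.ofFinite X
    set A' := {a | ∀ w ∈ W, a + w ∈ A} with hA'
    set B : Finset X := A'.toFinset with hB
    have hBc : (B.card : ℝ) = A'.ncard := by rw [Set.ncard_eq_toFinset_card']
    set N : ℝ := (Nat.card X : ℝ) with hN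
    have hNc : N = Fintype.card X := by rw [hN, Nat.card_eq_fintype_card]
    have hWc : ((Finset.univ.filter fun x : X => x ∈ W).card : ℝ) = 2 ^ t := by
      have h1 : (Finset.univ.filter fun x : X => x ∈ W).card = Nat.card W := by
        rw [Nat.card_eq_fintype_card, Fintype.card_subtype]
      rw [h1, Module.natCard_eq_pow_finrank (K := ZMod 2), hW]; simp
    have hNpos : 0 < N := lt_trans (by positivity) hX2
    have hBN : (B.card : ℝ) ≤ N := by rw [hNc]; exact_mod_cast Finset.card_le_univ B
    have ex : ∃ d, d ∉ W ∧ η ^ 2 / 2 * N ≤ (B.filter fun a => d + a ∈ B).card := by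
      by_contra hcon
      push Not at hcon
      have hs : ((∑ d, (B.filter fun a => d + a ∈ B).card : ℕ) : ℝ) = B.card * B.card := by
        rw [sum_shift]; push_cast; rfl
      have hle : ∑ d, ((B.filter fun a => d + a ∈ B).card : ℝ) ≤
          ∑ d : X, ((if d ∈ W then N else 0) + η ^ 2 / 2 * N) := by
        refine Finset.sum_le_sum fun d _ => ?_
        split_ifs with hd
        · have : ((B.filter fun a => d + a ∈ B).card : ℝ) ≤ B.card := by
            exact_mod_cast Finset.card_filter_le _ _
          have : 0 ≤ η ^ 2 / 2 * N := by positivity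
          linarith
        · have := (hcon d hd).le; linarith
      rw [Finset.sum_add_distrib, ← Finset.sum_filter] at hle
      simp only [Finset.sum_const, nsmul_eq_mul, Finset.card_univ, hWc, ← hNc] at hle
      push_cast at hs
      rw [hs] at hle
      rw [div_lt_iff₀ (by positivity)] at hX2
      have h3 : (η * N) * (η * N) ≤ B.card * B.card := by
        rw [hBc]; gcongr
      have : 2 ^ t * N < η ^ 2 / 2 * N * N := by
        have : (2:ℝ) ^ t < η ^ 2 / 2 * N := by rw [pow_succ] at hX2; linarith
        nlinarith
      nlinarith
    obtain ⟨d, hd, hdc⟩ := ex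
    refine ⟨W ⊔ Submodule.span (ZMod 2) {d}, ?_, ?_⟩
    · have hd0 : d ≠ 0 := by rintro rfl; exact hd W.zero_mem
      have hinf : W ⊓ Submodule.span (ZMod 2) {d} = ⊥ := by
        rw [eq_bot_iff]
        rintro x ⟨hx, hx2⟩
        obtain ⟨c, rfl⟩ := Submodule.mem_span_singleton.mp hx2
        rcases zmod_two_cases c with rfl | rfl
        · simp
        · simp at hx; exact absurd hx hd
      have := Submodule.finrank_sup_add_finrank_inf_eq W (Submodule.span (ZMod 2) {d})
      rw [hinf, finrank_bot, finrank_span_singleton hd0, hW] at this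
      simpa using this
    · refine hdc.trans ?_
      rw [Nat.cast_le, ← Set.ncard_coe_finset]
      apply Set.ncard_le_ncard _ (Set.toFinite _)
      intro a ha
      simp only [Finset.coe_filter, Set.mem_ofPred_eq, hB, Set.mem_toFinset, hA'] at ha ⊢
      intro w hw
      obtain ⟨y, hy, z, hz, rfl⟩ := Submodule.mem_sup.mp hw
      obtain ⟨c, rfl⟩ := Submodule.mem_span_singleton.mp hz
      rcases zmod_two_cases c with rfl | rfl
      · simpa using ha.1 y hy
      · have := ha.2 y hy
        rwa [one_smul, show a + (y + d) = d + a + y by abel]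

lemma flat (t : ℕ) (ε : ℝ) (hε : 0 < ε) : ∃ N0 : ℕ,
    ∀ (X : Type) [AddCommGroup X] [Module (ZMod 2) X] [Finite X], N0 ≤ Nat.card X →
    ∀ A : Set X, ε * Nat.card X ≤ A.ncard →
    ∃ (W : Submodule (ZMod 2) X) (a : X), Module.finrank (ZMod 2) W = t ∧ ∀ w ∈ W, a + w ∈ A := by
  obtain ⟨η, hη, N0, h⟩ := flat_aux t ε hε
  refine ⟨N0, fun X _ _ _ hX A hA => ?_⟩
  obtain ⟨W, hW, hc⟩ := h X hX A hA
  have : 0 < (Nat.card X : ℝ) := by exact_mod_cast Nat.card_pos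
  have : 0 < ({a | ∀ w ∈ W, a + w ∈ A}.ncard : ℝ) := lt_of_lt_of_le (by positivity) hc
  have : 0 < {a | ∀ w ∈ W, a + w ∈ A}.ncard := by exact_mod_cast this
  obtain ⟨a, ha⟩ := Set.nonempty_of_ncard_ne_zero this.ne'
  exact ⟨W, a, hW, ha⟩

lemma sumfree_half {X : Type*} [AddCommGroup X] [Module (ZMod 2) X] [Fintype X] (F : Finset X)
    (hF : ∀ x ∈ F, ∀ y ∈ F, x + y ∉ F) (hc : 7 * Fintype.card X ≤ 16 * F.card) :
    ∃ P : Submodule (ZMod 2) X, (∀ x ∈ F, x ∉ P) ∧ 2 * Nat.card P = Nat.card X := by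
  have hz2 : ∀ x : X, x + x = 0 := by
    intro x; rw [← two_smul (ZMod 2) x, show (2 : ZMod 2) = 0 from rfl, zero_smul]
  have hXpos : 0 < Fintype.card X := Fintype.card_pos
  have hne : F.Nonempty := by rw [← Finset.card_pos]; omega
  obtain ⟨f0, hf0⟩ := hne
  set H : Finset X := (F ×ˢ F).image fun p => p.1 + p.2 with hH
  have memH : ∀ x, x ∈ H ↔ ∃ a ∈ F, ∃ b ∈ F, x = a + b := by
    intro x; simp only [hH, Finset.mem_image, Finset.mem_product, Prod.exists]
    constructor
    · rintro ⟨a, b, ⟨ha, hb⟩, rfl⟩; exact ⟨a, ha, b, hb, rfl⟩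
    · rintro ⟨a, ha, b, hb, rfl⟩; exact ⟨a, b, ⟨ha, hb⟩, rfl⟩
  have hdisj : Disjoint H F := by
    rw [Finset.disjoint_left]
    intro x hx hxF
    obtain ⟨a, ha, b, hb, rfl⟩ := (memH x).mp hx
    exact hF a ha b hb hxF
  have hHc : H.card + F.card ≤ Fintype.card X := by
    rw [← Finset.card_union_of_disjoint hdisj]; exact Finset.card_le_univ _
  have big : ∀ d ∈ H, F.card < 2 * (F.filter fun x => x + d ∈ F).card := by
    intro d hd
    obtain ⟨a, ha, b, hb, rfl⟩ := (memH d).mp hd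
    have hsub : F.image (· + a) ∪ F.image (· + b) ⊆ H := by
      intro x hx
      simp only [Finset.mem_union, Finset.mem_image] at hx
      rcases hx with ⟨y, hy, rfl⟩ | ⟨y, hy, rfl⟩
      · exact (memH _).mpr ⟨y, hy, a, ha, rfl⟩
      · exact (memH _).mpr ⟨y, hy, b, hb, rfl⟩
    have h1 := Finset.card_le_card hsub
    have h2 := Finset.card_union_add_card_inter (F.image (· + a)) (F.image (· + b))
    rw [Finset.card_image_of_injective _ (add_left_injective a),
      Finset.card_image_of_injective _ (add_left_injective b)] at h2
    have h3 : (F.image (· + a) ∩ F.image (· + b)).card ≤ (F.filter fun x => x + (a + b) ∈ F).card := by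
      refine Finset.card_le_card_of_injOn (fun x => x + a) ?_ ?_
      · intro x hx
        simp only [Finset.coe_inter, Set.mem_inter_iff, Finset.coe_image, Set.mem_image, Finset.mem_coe] at hx
        obtain ⟨⟨y, hy, rfl⟩, z, hz, hzy⟩ := hx
        simp only [Finset.coe_filter, Set.mem_ofPred_eq]
        have e : y + a + a = y := by rw [add_assoc, hz2, add_zero]
        rw [e]
        refine ⟨hy, ?_⟩
        rw [← add_assoc, ← hzy, add_assoc, hz2, add_zero]; exact hz
      · intro x _ y _ h; simpa using h
    omega
  have hadd : ∀ d ∈ H, ∀ e ∈ H, d + e ∈ H := by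
    intro d hd e he
    have h1 := big d hd
    have h2 := big e he
    have : ((F.filter fun x => x + d ∈ F) ∩ (F.filter fun x => x + e ∈ F)).Nonempty := by
      rw [← Finset.card_pos]
      have h3 := Finset.card_union_add_card_inter (F.filter fun x => x + d ∈ F) (F.filter fun x => x + e ∈ F)
      have h4 : ((F.filter fun x => x + d ∈ F) ∪ (F.filter fun x => x + e ∈ F)).card ≤ F.card :=
        Finset.card_le_card (Finset.union_subset (Finset.filter_subset _ _) (Finset.filter_subset _ _))
      omega
    obtain ⟨x, hx⟩ := this
    simp only [Finset.mem_inter, Finset.mem_filter] at hx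
    refine (memH _).mpr ⟨x + d, hx.1.2, x + e, hx.2.2, ?_⟩
    rw [show x + d + (x + e) = (x + x) + (d + e) by abel, hz2, zero_add]
  have h0 : (0 : X) ∈ H := (memH _).mpr ⟨f0, hf0, f0, hf0, (hz2 f0).symm⟩
  let P : Submodule (ZMod 2) X :=
    { carrier := {x | x ∈ H}
      add_mem' := fun {a b} ha hb => hadd a ha b hb
      zero_mem' := h0
      smul_mem' := by
        intro c x hx
        rcases zmod_two_cases c with rfl | rfl
        · simpa using h0
        · simpa using hx }
  have hPm : ∀ x, x ∈ P ↔ x ∈ H := fun x => Iff.rfl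
  have hPc : Nat.card P = H.card := by
    rw [Nat.card_eq_fintype_card, Fintype.card_subtype]; congr 1; ext x; simp [hPm]
  refine ⟨P, fun x hx hxP => Finset.disjoint_left.mp hdisj hxP hx, ?_⟩
  have hge : F.card ≤ H.card := by
    rw [← Finset.card_image_of_injective F (add_left_injective f0)]
    apply Finset.card_le_card
    intro x hx
    obtain ⟨y, hy, rfl⟩ := Finset.mem_image.mp hx
    exact (memH _).mpr ⟨y, hy, f0, hf0, rfl⟩
  obtain ⟨j, hj⟩ := P.toAddSubgroup.card_addSubgroup_dvd_card
  have hj' : Fintype.card X = H.card * j := by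
    rw [← Nat.card_eq_fintype_card, hj, ← hPc]; rfl
  rw [hPc, Nat.card_eq_fintype_card, hj']
  have : j < 3 := by
    by_contra h
    have : H.card * 3 ≤ H.card * j := Nat.mul_le_mul_left _ (by omega)
    omega
  interval_cases j <;> omega

end Stab

section Stab2

lemma triangle {V X : Type*} [Fintype V] [DecidableEq V] [AddCommGroup X] [Finite X]
    [Module (ZMod 2) X] (G : SimpleGraph V) (f g : V → ZMod 2)
    (hfg : ∀ u v, G.Adj u v → f u ≠ f v ∨ g u ≠ g v)
    (M : Set X) (W : Submodule (ZMod 2) X) (δ : ℝ) (hδ : 0 ≤ δ)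
    (h3 : (Fintype.card V : ℝ) ^ 2 * δ + 2 ^ Fintype.card V / Nat.card W < 1) (a b : X)
    (ha : ({y : W | a + y ∉ M}.ncard : ℝ) ≤ δ * Nat.card W)
    (hb : ({y : W | b + y ∉ M}.ncard : ℝ) ≤ δ * Nat.card W)
    (hab : ({y : W | a + b + y ∉ M}.ncard : ℝ) ≤ δ * Nat.card W) :
    HasRestriction (cycleMatroid G) M := by
  have hne : ∀ z w : ZMod 2, z ≠ w → z + w = 1 := by decide
  have heq : ∀ z : ZMod 2, z + z = 0 := by decide
  refine embed G M W id (fun v => f v • a + g v • b) δ ?_ ?_ hδ h3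
  · intro u v huv
    right
    refine ⟨G.ne_of_adj huv, ?_⟩
    have e : f u • a + g u • b + (f v • a + g v • b) = (f u + f v) • a + (g u + g v) • b := by
      rw [add_smul, add_smul]; abel
    simp only [e]
    by_cases h1 : f u = f v
    · by_cases h2 : g u = g v
      · rcases hfg u v huv with h | h <;> contradiction
      · rw [h1, heq, hne _ _ h2]; simpa using hb
    · by_cases h2 : g u = g v
      · rw [h2, heq, hne _ _ h1]; simpa using ha
      · rw [hne _ _ h1, hne _ _ h2]; simpa using hab
  · intro c hc _
    funext v
    have := hc v
    simpa [Finset.sum_filter] using this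

lemma sum_inv {X : Type*} [AddCommGroup X] [Fintype X] [Module (ZMod 2) X] (M : Set X)
    (W : Submodule (ZMod 2) X) (F : Finset X) (hF : ∀ x ∈ F, ∀ w ∈ W, x + w ∈ F) :
    ∑ x ∈ F, {y : W | x + y ∈ M}.ncard = Nat.card W * (F.filter (· ∈ M)).card := by
  have := Fintype.ofFinite W
  have e : ∀ x : X, {y : W | x + y ∈ M}.ncard = ∑ y : W, if x + y ∈ M then 1 else 0 := by
    intro x
    rw [← Finset.card_filter, ← Set.ncard_coe_finset]; congr 1; ext; simp
  simp only [e]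
  rw [Finset.sum_comm, Finset.sum_congr rfl (g := fun _ => (F.filter (· ∈ M)).card)]
  · simp [Nat.card_eq_fintype_card]
  · intro y _
    rw [← Finset.card_filter]
    refine Finset.card_bij (fun x _ => x + y) ?_ ?_ ?_
    · intro x hx
      simp only [Finset.mem_filter] at hx ⊢
      exact ⟨hF x hx.1 y y.2, hx.2⟩
    · intro x _ x' _ h; simpa using h
    · intro x hx
      simp only [Finset.mem_filter] at hx ⊢
      refine ⟨x + -(y : X), ⟨hF x hx.1 _ (W.neg_mem y.2), ?_⟩, by simp⟩
      simpa using hx.2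

lemma stab {V : Type*} [Fintype V] [DecidableEq V] (G : SimpleGraph V) (f g : V → ZMod 2)
    (hfg : ∀ u v, G.Adj u v → f u ≠ f v ∨ g u ≠ g v) (δ : ℝ) (hδ0 : 0 < δ) (hδ1 : δ ≤ 1 / 8)
    (hδ2 : (Fintype.card V : ℝ) ^ 2 * δ ≤ 1 / 8) :
    ∃ N0 : ℕ, ∀ (X : Type) [AddCommGroup X] [Module (ZMod 2) X] [Fintype X], N0 ≤ Nat.card X →
      ∀ M : Set X, Nat.card X ≤ 2 * M.ncard → ¬ HasRestriction (cycleMatroid G) M →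
      ∃ (P : Submodule (ZMod 2) X) (q : X), q ∉ P ∧ 2 * Nat.card P = Nat.card X ∧
        ({y : P | q + y ∉ M}.ncard : ℝ) ≤ 3 * δ * Nat.card P := by
  set k := Fintype.card V with hk
  have cardW : ∀ {X : Type} [AddCommGroup X] [Module (ZMod 2) X] [Finite X] (W : Submodule (ZMod 2) X),
      k + 1 ≤ Module.finrank (ZMod 2) W → (2 : ℝ) ^ k / Nat.card W ≤ 1 / 2 := by
    intro X _ _ _ W hW
    rw [Module.natCard_eq_pow_finrank (K := ZMod 2)]
    simp only [Nat.card_eq_fintype_card, ZMod.card, Nat.cast_pow, Nat.cast_ofNat]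
    rw [div_le_iff₀ (by positivity)]
    have : (2:ℝ) ^ (k+1) ≤ 2 ^ Module.finrank (ZMod 2) W := pow_le_pow_right₀ (by norm_num) hW
    rw [pow_succ] at this; linarith
  set ε : ℝ := δ ^ 3 with hε
  have hεpos : 0 < ε := by positivity
  obtain ⟨N1, hN1⟩ := flat (k + 1) ε hεpos
  obtain ⟨N0, hN0⟩ := flat (max N1 (k + 1)) (1 / 2) (by norm_num)
  refine ⟨N0, ?_⟩
  intro X _ _ _ hX M hM hno
  have hz2 : ∀ x : X, x + x = 0 := by
    intro x; rw [← two_smul (ZMod 2) x, show (2 : ZMod 2) = 0 from rfl, zero_smul]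
  obtain ⟨W, u, hW, hu⟩ := hN0 X hX M (by
    have : (Nat.card X : ℝ) ≤ 2 * M.ncard := by exact_mod_cast hM
    linarith)
  have hWN1 : N1 ≤ Nat.card W := by
    rw [Module.natCard_eq_pow_finrank (K := ZMod 2), hW]
    simp only [Nat.card_eq_fintype_card, ZMod.card]
    exact (le_max_left _ _).trans (Nat.lt_two_pow_self).le
  have hWk := cardW W (by rw [hW]; exact le_max_right _ _)
  have := Fintype.ofFinite W
  set N : ℝ := (Nat.card W : ℝ) with hN
  have hNpos : 0 < N := by rw [hN]; exact_mod_cast Nat.card_pos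
  let A : X → Finset W := fun x => Finset.univ.filter fun y : W => x + y ∈ M
  have hA : ∀ x : X, {y : W | x + y ∈ M}.ncard = (A x).card := by
    intro x; rw [← Set.ncard_coe_finset]; congr 1; ext; simp [A]
  have small : ∀ (x : X) (w : W),
      (((A x).filter fun y => w + y ∈ A (x + u)).card : ℝ) < ε * N := by
    intro x w
    by_contra hcon
    push Not at hcon
    obtain ⟨W', y0, hW', hy0⟩ := hN1 W hWN1 ((A x).filter fun y => w + y ∈ A (x + u) : Finset W)
      (by rw [Set.ncard_coe_finset]; exact hcon)
    apply hno
    have hW'' : Module.finrank (ZMod 2) (W'.map W.subtype) = k + 1 := by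
      rw [← hW']
      exact Submodule.finrank_map_subtype_eq W W'
    have hmem : ∀ y ∈ W'.map W.subtype, ∃ z : W, z ∈ W' ∧ (z : X) = y := by
      intro y hy
      obtain ⟨z, hz, rfl⟩ := Submodule.mem_map.mp hy
      exact ⟨z, hz, rfl⟩
    have hc0 := cardW (W'.map W.subtype) (by rw [hW''])
    refine triangle G f g hfg M (W'.map W.subtype) 0 le_rfl (by rw [mul_zero]; linarith)
      (x + y0) (u + w) ?_ ?_ ?_
    · have : {y : W'.map W.subtype | x + y0 + (y : X) ∉ M} = ∅ := by
        ext ⟨y, hy⟩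
        obtain ⟨z, hz, rfl⟩ := hmem y hy
        have := hy0 z hz
        simp [A] at this ⊢
        rw [add_assoc]; exact this.1
      rw [this]; simp
    · have : {y : W'.map W.subtype | u + w + (y : X) ∉ M} = ∅ := by
        ext ⟨y, hy⟩
        obtain ⟨z, hz, rfl⟩ := hmem y hy
        have := hu (w + z) (W.add_mem w.2 z.2)
        simp
        rw [add_assoc]; exact this
      rw [this]; simp
    · have : {y : W'.map W.subtype | x + y0 + (u + w) + (y : X) ∉ M} = ∅ := by
        ext ⟨y, hy⟩
        obtain ⟨z, hz, rfl⟩ := hmem y hy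
        have := hy0 z hz
        simp [A] at this ⊢
        convert this.2 using 1
        abel
      rw [this]; simp
  have prod : ∀ x, ((A x).card : ℝ) * (A (x + u)).card ≤ ε * N * N := by
    intro x
    have h := sum_shift (A x) (A (x + u))
    have h' : ∑ w : W, (((A x).filter fun y => w + y ∈ A (x + u)).card : ℝ)
      = ((A x).card : ℝ) * (A (x + u)).card := by
      rw [← Nat.cast_mul, ← h, Nat.cast_sum]
      refine Finset.sum_congr rfl fun w _ => ?_
      congr!
    rw [← h']
    refine (Finset.sum_le_sum fun w _ => (small x w).le).trans ?_
    simp [hN, Nat.card_eq_fintype_card]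
    apply le_of_eq; ring
  let F : Finset X := Finset.univ.filter fun x => (1 - δ) * N ≤ (A x).card
  have hAN : ∀ x, ((A x).card : ℝ) ≤ N := by
    intro x; rw [hN, Nat.card_eq_fintype_card]; exact_mod_cast Finset.card_le_univ _
  have miss : ∀ x : X, ({y : W | x + y ∉ M}.ncard : ℝ) = N - (A x).card := by
    intro x
    have h1 : {y : W | x + y ∉ M}.ncard = (Finset.univ.filter fun y : W => ¬ (x + y ∈ M)).card := by
      rw [← Set.ncard_coe_finset]; congr 1; ext; simp
    have h2 := Finset.card_filter_add_card_filter_not (s := (Finset.univ : Finset W)) (fun y : W => x + y ∈ M)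
    rw [h1, hN, Nat.card_eq_fintype_card, ← Finset.card_univ, ← h2]
    push_cast; simp [A]
  have sf : ∀ x ∈ F, ∀ y ∈ F, x + y ∉ F := by
    intro x hx y hy hxy
    simp only [F, Finset.mem_filter, Finset.mem_univ, true_and] at hx hy hxy
    apply hno
    refine triangle G f g hfg M W δ hδ0.le (by linarith) x y ?_ ?_ ?_ <;> rw [miss] <;> linarith
  have Finv : ∀ x ∈ F, ∀ w ∈ W, x + w ∈ F := by
    intro x hx w hw
    simp only [F, Finset.mem_filter, Finset.mem_univ, true_and] at hx ⊢
    have : (A (x + w)).card = (A x).card := by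
      refine Finset.card_bij (fun y _ => ⟨w, hw⟩ + y) ?_ ?_ ?_
      · intro y hy; simp [A] at hy ⊢; rw [← add_assoc]; exact hy
      · intro y _ y' _ h; simpa using h
      · intro y hy; refine ⟨-⟨w, hw⟩ + y, ?_, by simp⟩
        simp [A] at hy ⊢; simpa [add_assoc] using hy
    rw [this]; exact hx
  set T : ℝ := (Fintype.card X : ℝ) with hT
  have hTpos : 0 < T := by rw [hT]; exact_mod_cast Fintype.card_pos
  have s1 : ∑ x, ((A x).card : ℝ) = N * M.ncard := by
    have := sum_inv M W Finset.univ (by simp)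
    simp only [hA] at this
    rw [show (Finset.univ.filter (· ∈ M)).card = M.ncard by
      rw [← Set.ncard_coe_finset]; congr 1; ext; simp] at this
    rw [hN]; exact_mod_cast this
  have s2 : ∑ x, ((A (x + u)).card : ℝ) = N * M.ncard := by
    rw [← s1]; exact Fintype.sum_equiv (Equiv.addRight u) _ _ (fun x => rfl)
  let B : Finset X := Finset.univ.filter fun x => x ∉ F ∧ x + u ∉ F
  have hB : δ ^ 2 * B.card ≤ ε * T := by
    have h1 : ∀ x, ((A x).card : ℝ) + (A (x + u)).card ≤ N * (1 + ε - if x ∈ B then δ ^ 2 else 0) := by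
      intro x
      have hp := prod x
      set a : ℝ := ((A x).card : ℝ) with ha
      set b : ℝ := ((A (x + u)).card : ℝ) with hb
      have ha1 : a ≤ N := hAN x
      have hb1 : b ≤ N := hAN _
      have goal' : ∀ η : ℝ, η * N * N ≤ (N - a) * (N - b) → a + b ≤ N * (1 + ε - η) := by
        intro η hη
        have : (a + b) * N ≤ (N * (1 + ε - η)) * N := by nlinarith
        exact le_of_mul_le_mul_right this hNpos
      apply goal'
      split_ifs with hx
      · simp only [B, F, Finset.mem_filter, Finset.mem_univ, true_and, not_le] at hx
        have h1 : δ * N ≤ N - a := by linarith [hx.1]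
        have h2 : δ * N ≤ N - b := by linarith [hx.2]
        calc δ ^ 2 * N * N = (δ * N) * (δ * N) := by ring
          _ ≤ _ := mul_le_mul h1 h2 (by positivity) (by linarith)
      · have := mul_nonneg (sub_nonneg.mpr ha1) (sub_nonneg.mpr hb1)
        linarith
    have h2 := Finset.sum_le_sum (s := Finset.univ) (fun x _ => h1 x)
    rw [Finset.sum_add_distrib, s1, s2, ← Finset.mul_sum, Finset.sum_sub_distrib] at h2
    simp only [Finset.sum_const, Finset.card_univ, nsmul_eq_mul, ← hT, Finset.sum_ite_mem,
      Finset.univ_inter] at h2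
    have h3 : T ≤ 2 * M.ncard := by
      rw [hT, ← Nat.card_eq_fintype_card]; exact_mod_cast hM
    have h4 : N * T ≤ N * (T * (1 + ε) - B.card * δ ^ 2) := by nlinarith
    have := le_of_mul_le_mul_left h4 hNpos
    linarith
  have hB' : (B.card : ℝ) ≤ δ * T := by
    have : δ ^ 2 * B.card ≤ δ ^ 2 * (δ * T) := by
      calc _ ≤ _ := hB
        _ = _ := by rw [hε]; ring
    exact le_of_mul_le_mul_left this (by positivity)
  have hFT : T ≤ 2 * F.card + B.card := by
    have hcov : (Finset.univ : Finset X) ⊆ (F ∪ F.image (· + u)) ∪ B := by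
      intro x _
      by_cases h1 : x ∈ F
      · simp [h1]
      by_cases h2 : x + u ∈ F
      · apply Finset.mem_union_left; apply Finset.mem_union_right
        exact Finset.mem_image.mpr ⟨x + u, h2, by simp [add_assoc, hz2]⟩
      · apply Finset.mem_union_right
        simp only [B, Finset.mem_filter]; exact ⟨Finset.mem_univ _, h1, h2⟩
    have h1 := (Finset.card_le_card hcov).trans (Finset.card_union_le _ _)
    have h2 := Finset.card_union_le F (F.image (· + u))
    have h3 : (F.image (· + u)).card ≤ F.card := Finset.card_image_le
    have : Fintype.card X ≤ 2 * F.card + B.card := by rw [← Finset.card_univ]; omega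
    rw [hT]; exact_mod_cast this
  have hF16 : 7 * Fintype.card X ≤ 16 * F.card := by
    have : 7 * T ≤ 16 * F.card := by nlinarith
    rw [hT] at this; exact_mod_cast this
  obtain ⟨P, hP, hPc⟩ := sumfree_half F sf hF16
  have hFne : F.Nonempty := by
    rw [← Finset.card_pos]; have : 0 < Fintype.card X := Fintype.card_pos; omega
  obtain ⟨q, hq⟩ := hFne
  refine ⟨P, q, hP q hq, hPc, ?_⟩
  -- elements of q + P outside M
  have := Fintype.ofFinite P
  let C : Finset X := Finset.univ.image fun y : P => q + (y : X)
  have hCc : C.card = Nat.card P := by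
    rw [Finset.card_image_of_injective, Finset.card_univ, Nat.card_eq_fintype_card]
    intro a b h; simpa using h
  have hFC : F ⊆ C := by
    have hdis : Disjoint C (Finset.univ.filter (· ∈ P)) := by
      rw [Finset.disjoint_left]
      intro x hx hx2
      obtain ⟨y, _, rfl⟩ := Finset.mem_image.mp hx
      simp at hx2
      exact hP q hq (by simpa using P.sub_mem hx2 y.2)
    have hPf : (Finset.univ.filter fun x : X => x ∈ P).card = Nat.card P := by
      rw [Nat.card_eq_fintype_card, Fintype.card_subtype]
    have hun : C ∪ (Finset.univ.filter (· ∈ P)) = Finset.univ := by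
      apply Finset.eq_univ_of_card
      rw [Finset.card_union_of_disjoint hdis, hCc, hPf, ← Nat.card_eq_fintype_card, ← hPc]; ring
    intro x hx
    have : x ∈ C ∪ (Finset.univ.filter (· ∈ P)) := by rw [hun]; simp
    rcases Finset.mem_union.mp this with h | h
    · exact h
    · exact absurd (Finset.mem_filter.mp h).2 (hP x hx)
  have e1 : {y : P | q + y ∉ M}.ncard = (C.filter (· ∉ M)).card := by
    rw [← Set.ncard_coe_finset, ← Set.ncard_image_of_injective (f := fun y : P => q + (y : X))]
    · congr 1; ext x
      simp only [C, Set.mem_image, Set.mem_ofPred_eq, Finset.coe_filter, Finset.mem_image,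
        Finset.mem_univ, true_and]
      constructor
      · rintro ⟨y, hy, rfl⟩; exact ⟨⟨y, rfl⟩, hy⟩
      · rintro ⟨⟨y, rfl⟩, hy⟩; exact ⟨y, hy, rfl⟩
    · intro a b h; simpa using h
  have e2 : (1 - δ) * F.card ≤ ((F.filter (· ∈ M)).card : ℝ) := by
    have h := sum_inv M W F Finv
    simp only [hA] at h
    have h' : ∑ x ∈ F, ((A x).card : ℝ) = N * (F.filter (· ∈ M)).card := by
      rw [hN]; exact_mod_cast h
    have h2 : ∑ x ∈ F, (1 - δ) * N ≤ ∑ x ∈ F, ((A x).card : ℝ) := by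
      refine Finset.sum_le_sum fun x hx => ?_
      exact (Finset.mem_filter.mp hx).2
    rw [h'] at h2
    simp only [Finset.sum_const, nsmul_eq_mul] at h2
    have : N * ((1 - δ) * F.card) ≤ N * (F.filter (· ∈ M)).card := by linarith
    exact le_of_mul_le_mul_left this hNpos
  have e3 : ((C.filter (· ∉ M)).card : ℝ) + (F.filter (· ∈ M)).card ≤ C.card := by
    have h1 := Finset.card_filter_add_card_filter_not (s := C) (· ∈ M)
    have h2 : (F.filter (· ∈ M)).card ≤ (C.filter (· ∈ M)).card :=
      Finset.card_le_card (Finset.filter_subset_filter _ hFC)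
    have : (C.filter (· ∉ M)).card + (F.filter (· ∈ M)).card ≤ C.card := by omega
    exact_mod_cast this
  have e4 : T = 2 * Nat.card P := by
    rw [hT, ← Nat.card_eq_fintype_card, ← hPc]; push_cast; rfl
  have e5 : (F.card : ℝ) ≤ C.card := by exact_mod_cast Finset.card_le_card hFC
  rw [e1]
  rw [hCc] at e3 e5
  nlinarith

end Stab2

section GraphPart

/-- the monochromatic edges of `f` -/
noncomputable def ncut {V : Type*} [Fintype V] (G : SimpleGraph V) (f : V → ZMod 2) :
    Finset (Sym2 V) :=
  Finset.univ.filter fun e => e ∈ G.edgeSet ∧ (e.map f).IsDiag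

lemma mem_ncut {V : Type*} [Fintype V] (G : SimpleGraph V) (f : V → ZMod 2) (u v : V) :
    s(u, v) ∈ ncut G f ↔ G.Adj u v ∧ f u = f v := by
  simp [ncut]

lemma ncut_split {V : Type*} [Fintype V] [DecidableEq V] (G : SimpleGraph V) [DecidableRel G.Adj]
    (f : V → ZMod 2) (v₀ : V) :
    (ncut G f).card = ((ncut G f).filter (v₀ ∉ ·)).card
      + ((G.neighborFinset v₀).filter (fun w => f w = f v₀)).card := by
  have h := Finset.card_filter_add_card_filter_not (s := ncut G f) (fun e => v₀ ∉ e)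
  rw [← h]
  congr 1
  symm
  refine Finset.card_bij (fun w _ => s(v₀, w)) ?_ ?_ ?_
  · intro w hw
    simp only [Finset.mem_filter, SimpleGraph.mem_neighborFinset] at hw
    simp [mem_ncut, hw.1, hw.2]
  · intro a _ b _ hab
    simp only [Sym2.eq_iff, true_and] at hab
    rcases hab with h | ⟨h1, h2⟩
    · exact h
    · exact h2.trans h1
  · intro e he
    simp only [Finset.mem_filter, not_not] at he
    obtain ⟨he, w, rfl⟩ := he
    rw [mem_ncut] at he
    exact ⟨w, by simp [he.1, he.2], rfl⟩

lemma flip_facts {V : Type*} [Fintype V] [DecidableEq V] (G : SimpleGraph V) [DecidableRel G.Adj]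
    (hreg : G.IsRegularOfDegree 3) (f : V → ZMod 2) (v₀ u w : V) (hu : G.Adj v₀ u)
    (hw : G.Adj v₀ w) (huw : u ≠ w) (hfu : f u = f v₀) (hfw : f w = f v₀) :
    (ncut G (Function.update f v₀ (f v₀ + 1))).card < (ncut G f).card ∧
    ∀ a b, G.Adj v₀ a → G.Adj v₀ b → f a ≠ f v₀ → f b ≠ f v₀ → a = b := by
  have h2 : 1 < ((G.neighborFinset v₀).filter (fun w => f w = f v₀)).card := by
    rw [Finset.one_lt_card]
    exact ⟨u, by simp [hu, hfu], w, by simp [hw, hfw], huw⟩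
  have h3 := Finset.card_filter_add_card_filter_not (s := G.neighborFinset v₀) (fun w => f w = f v₀)
  rw [SimpleGraph.card_neighborFinset_eq_degree, hreg v₀] at h3
  constructor
  · rw [ncut_split G f v₀, ncut_split G _ v₀]
    have e1 : (ncut G (Function.update f v₀ (f v₀ + 1))).filter (v₀ ∉ ·) = (ncut G f).filter (v₀ ∉ ·) := by
      ext e
      induction e with | _ a b =>
      simp only [Finset.mem_filter, mem_ncut, Sym2.mem_iff, not_or]
      constructor
      · rintro ⟨⟨h, h'⟩, ha, hb⟩
        rw [Function.update_of_ne (Ne.symm ha), Function.update_of_ne (Ne.symm hb)] at h'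
        exact ⟨⟨h, h'⟩, ha, hb⟩
      · rintro ⟨⟨h, h'⟩, ha, hb⟩
        rw [Function.update_of_ne (Ne.symm ha), Function.update_of_ne (Ne.symm hb)]
        exact ⟨⟨h, h'⟩, ha, hb⟩
    have e2 : ((G.neighborFinset v₀).filter (fun w => Function.update f v₀ (f v₀ + 1) w
        = Function.update f v₀ (f v₀ + 1) v₀)).card
        ≤ ((G.neighborFinset v₀).filter (fun w => ¬ f w = f v₀)).card := by
      apply Finset.card_le_card
      intro x hx
      simp only [Finset.mem_filter, SimpleGraph.mem_neighborFinset, Function.update_self] at hx ⊢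
      rw [Function.update_of_ne (G.ne_of_adj hx.1).symm] at hx
      refine ⟨hx.1, ?_⟩
      rw [hx.2]; simp
    rw [e1]
    omega
  · intro a b ha hb hfa hfb
    have h4 : ((G.neighborFinset v₀).filter (fun w => ¬ f w = f v₀)).card ≤ 1 := by omega
    rw [Finset.card_le_one] at h4
    exact h4 a (by simp [ha, hfa]) b (by simp [hb, hfb])

lemma match_struct {V : Type*} [Fintype V] [DecidableEq V] (G : SimpleGraph V) (f : V → ZMod 2)
    (hm : ∀ v u w, G.Adj v u → G.Adj v w → f u = f v → f w = f v → u = w) :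
    ∃ (R : Finset V) (r : V → V), R.card = (ncut G f).card ∧
      (∀ u v, G.Adj u v → f u = f v → r u = r v ∧ ((u ∈ R ∧ v ∉ R) ∨ (u ∉ R ∧ v ∈ R))) ∧
      (∀ v, f (r v) = f v) ∧ (∀ v ∈ R, r v = v) ∧ (∀ v ∉ R, ∀ w ∉ R, r v = r w → v = w) ∧
      (∀ v ∈ R, ∃ w, w ∉ R ∧ G.Adj v w ∧ f v = f w) := by
  let R : Finset V := (ncut G f).image fun e => e.out.1
  have hout : ∀ e : Sym2 V, e = s(e.out.1, e.out.2) := by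
    intro e; exact (Quot.out_eq e).symm
  have memR : ∀ v, v ∈ R ↔ ∃ w, G.Adj v w ∧ f v = f w ∧ (s(v, w)).out.1 = v := by
    intro v
    simp only [R, Finset.mem_image]
    constructor
    · rintro ⟨e, he, rfl⟩
      have he' := he
      rw [hout e, mem_ncut] at he'
      refine ⟨e.out.2, he'.1, he'.2, ?_⟩
      rw [← hout e]
    · rintro ⟨w, h1, h2, h3⟩
      exact ⟨s(v, w), (mem_ncut G f v w).mpr ⟨h1, h2⟩, h3⟩
  have out_or : ∀ u v : V, (s(u, v)).out.1 = u ∨ (s(u, v)).out.1 = v := by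
    intro u v
    have := Sym2.out_fst_mem s(u, v)
    simpa using this
  have excl : ∀ u v, G.Adj u v → f u = f v → ((u ∈ R ∧ v ∉ R) ∨ (u ∉ R ∧ v ∈ R)) := by
    have one : ∀ u v, G.Adj u v → f u = f v → (s(u, v)).out.1 = u → u ∈ R ∧ v ∉ R := by
      intro u v h hf ho
      refine ⟨(memR u).mpr ⟨v, h, hf, ho⟩, fun hv => ?_⟩
      obtain ⟨w, h1, h2, h3⟩ := (memR v).mp hv
      have : w = u := hm v w u h1 h.symm h2.symm hf
      subst this
      rw [Sym2.eq_swap, ho] at h3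
      exact G.ne_of_adj h h3
    intro u v h hf
    rcases out_or u v with ho | ho
    · exact Or.inl (one u v h hf ho)
    · rw [Sym2.eq_swap] at ho
      exact Or.inr (one v u h.symm hf.symm ho).symm
  let r : V → V := fun v => if h : v ∉ R ∧ ∃ w, G.Adj v w ∧ f v = f w then h.2.choose else v
  have rR : ∀ v ∈ R, r v = v := by
    intro v hv; simp only [r]; rw [dif_neg]; tauto
  have rA : ∀ u v, G.Adj u v → f u = f v → u ∉ R → r u = v := by
    intro u v h hf hu
    have hh : u ∉ R ∧ ∃ w, G.Adj u w ∧ f u = f w := ⟨hu, v, h, hf⟩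
    simp only [r]; rw [dif_pos hh]
    exact hm u _ v hh.2.choose_spec.1 h hh.2.choose_spec.2.symm hf.symm
  have rN : ∀ u, (¬ ∃ w, G.Adj u w ∧ f u = f w) → r u = u := by
    intro u hu; simp only [r]; rw [dif_neg]; exact fun h => hu h.2
  refine ⟨R, r, ?_, ?_, ?_, rR, ?_, ?_⟩
  · apply Finset.card_image_of_injOn
    intro e he e' he' h
    simp only [Finset.mem_coe] at he he' h
    rw [hout e, hout e']
    rw [hout e, mem_ncut] at he
    rw [hout e', mem_ncut, ← h] at he'
    rw [← h, hm _ _ _ he.1 he'.1 he.2.symm he'.2.symm]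
  · intro u v h hf
    refine ⟨?_, excl u v h hf⟩
    rcases excl u v h hf with ⟨h1, h2⟩ | ⟨h1, h2⟩
    · rw [rR u h1, rA v u h.symm hf.symm h2]
    · rw [rR v h2, rA u v h hf h1]
  · intro v
    by_cases h : ∃ w, G.Adj v w ∧ f v = f w
    · by_cases hv : v ∈ R
      · rw [rR v hv]
      · obtain ⟨w, h1, h2⟩ := h
        rw [rA v w h1 h2 hv, h2]
    · rw [rN v h]
  · intro v hv w hw hvw
    by_cases h : ∃ x, G.Adj v x ∧ f v = f x
    · obtain ⟨x, h1, h2⟩ := h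
      have hx : x ∈ R := by rcases excl v x h1 h2 with h | h <;> tauto
      rw [rA v x h1 h2 hv] at hvw
      by_cases h' : ∃ y, G.Adj w y ∧ f w = f y
      · obtain ⟨y, h3, h4⟩ := h'
        rw [rA w y h3 h4 hw] at hvw
        subst hvw
        exact hm x v w h1.symm h3.symm h2 h4
      · rw [rN w h'] at hvw; subst hvw; contradiction
    · rw [rN v h] at hvw
      by_cases h' : ∃ y, G.Adj w y ∧ f w = f y
      · obtain ⟨y, h3, h4⟩ := h'
        rw [rA w y h3 h4 hw] at hvw
        subst hvw
        rcases excl w v h3 h4 with h | h <;> tauto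
      · rw [rN w h'] at hvw; exact hvw
  · intro v hv
    obtain ⟨w, h1, h2, _⟩ := (memR v).mp hv
    exact ⟨w, by rcases excl v w h1 h2 with h | h <;> tauto, h1, h2⟩

lemma rank_bound {V : Type*} [Fintype V] [DecidableEq V] (G : SimpleGraph V) [DecidableRel G.Adj]
    (hreg : G.IsRegularOfDegree 3) (ν : ℕ) (hν : ∀ f, ν ≤ (ncut G f).card) :
    ∀ (m : ℕ) (f : V → ZMod 2) (Z : Submodule (ZMod 2) (V → ZMod 2)), (ncut G f).card = m →
      (∀ u v, G.Adj u v → f u = f v → (Pi.single u 1 + Pi.single v 1 : V → ZMod 2) ∈ Z) →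
      ν ≤ Module.finrank (ZMod 2) Z := by
  intro m
  induction m using Nat.strong_induction_on with
  | _ m ih =>
  intro f Z hfm hZ
  by_cases hm : ∀ v u w, G.Adj v u → G.Adj v w → f u = f v → f w = f v → u = w
  · obtain ⟨R, r, hRc, -, -, -, -, hR⟩ := match_struct G f hm
    choose! p hp using hR
    refine (hν f).trans ?_
    rw [← hRc]
    let b : R → Z := fun v => ⟨Pi.single (v : V) 1 + Pi.single (p v) 1, hZ _ _ (hp v v.2).2.1 (hp v v.2).2.2⟩
    have hb : LinearIndependent (ZMod 2) b := by
      rw [Fintype.linearIndependent_iff]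
      intro c hc i
      have h1 : ((∑ i, c i • b i : Z) : V → ZMod 2) i = 0 := by rw [hc]; rfl
      rw [Submodule.coe_sum, Finset.sum_apply, Finset.sum_eq_single i] at h1
      · have : (i : V) ≠ p i := G.ne_of_adj (hp i i.2).2.1
        simpa [b, Pi.single_eq_of_ne this] using h1
      · intro j _ hj
        have h2 : (i : V) ≠ p j := by
          intro h; exact (hp j j.2).1 (h ▸ i.2)
        have h3 : (i : V) ≠ j := fun h => hj (Subtype.ext h.symm)
        simp [b, Pi.single_eq_of_ne h2, Pi.single_eq_of_ne h3]
      · simp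
    have := hb.fintype_card_le_finrank
    simpa using this
  · push Not at hm
    obtain ⟨v, u, w, hu, hw, hfu, hfw, huw⟩ := hm
    obtain ⟨hlt, huniq⟩ := flip_facts G hreg f v u w hu hw huw hfu hfw
    let Z0 : Submodule (ZMod 2) (V → ZMod 2) := Z ⊓ LinearMap.ker (LinearMap.proj (R := ZMod 2) (φ := fun _ : V => ZMod 2) v)
    have hZ0 : Module.finrank (ZMod 2) Z0 < Module.finrank (ZMod 2) Z := by
      apply Submodule.finrank_lt_finrank_of_lt
      refine lt_of_le_of_ne inf_le_left ?_
      intro h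
      have h1 : (Pi.single v 1 + Pi.single u 1 : V → ZMod 2) ∈ Z0 := by
        rw [h]; exact hZ v u hu hfu.symm
      have h2 := h1.2
      simp [Pi.single_eq_of_ne (G.ne_of_adj hu)] at h2
    obtain ⟨d, hd⟩ : ∃ d : V → ZMod 2, ∀ a, G.Adj v a → f a ≠ f v →
        (Pi.single v 1 + Pi.single a 1 : V → ZMod 2) = d := by
      by_cases hex : ∃ a, G.Adj v a ∧ f a ≠ f v
      · obtain ⟨a, h1, h2⟩ := hex
        exact ⟨Pi.single v 1 + Pi.single a 1, fun b h3 h4 => by rw [huniq a b h1 h3 h2 h4]⟩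
      · exact ⟨0, fun a h1 h2 => absurd ⟨a, h1, h2⟩ hex⟩
    have hZ' := ih _ (hfm ▸ hlt) (Function.update f v (f v + 1)) (Z0 ⊔ Submodule.span (ZMod 2) {d}) rfl ?_
    · have h1 := Submodule.finrank_add_le_finrank_add_finrank Z0 (Submodule.span (ZMod 2) {d})
      have h2 : Module.finrank (ZMod 2) (Submodule.span (ZMod 2) {d}) ≤ 1 := by
        have := finrank_span_le_card (R := ZMod 2) ({d} : Set (V → ZMod 2))
        simpa using this
      omega
    · intro a b hab hf
      have hne : ∀ x y : ZMod 2, x = y + 1 → x ≠ y := by decide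
      by_cases ha : a = v
      · subst ha
        rw [Function.update_self, Function.update_of_ne (G.ne_of_adj hab).symm] at hf
        rw [hd b hab (hne _ _ hf.symm)]
        exact Submodule.mem_sup_right (Submodule.mem_span_singleton_self d)
      · by_cases hb : b = v
        · subst hb
          rw [Function.update_self, Function.update_of_ne (G.ne_of_adj hab)] at hf
          rw [add_comm, hd a hab.symm (hne _ _ hf)]
          exact Submodule.mem_sup_right (Submodule.mem_span_singleton_self d)
        · rw [Function.update_of_ne ha, Function.update_of_ne hb] at hf
          refine Submodule.mem_sup_left ⟨hZ a b hab hf, ?_⟩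
          simp [Pi.single_eq_of_ne (Ne.symm ha), Pi.single_eq_of_ne (Ne.symm hb)]

lemma cut_ncut {V : Type*} [Fintype V] (G : SimpleGraph V) (f : V → ZMod 2) :
    {e : Sym2 V | e ∈ G.edgeSet ∧ ∃ u v, e = s(u, v) ∧ u ∈ {v | f v = 1} ∧ v ∉ {v | f v = 1}}.ncard
      + (ncut G f).card = G.edgeSet.ncard := by
  have hne : ∀ x y : ZMod 2, x ≠ y → (x = 1 ∧ y ≠ 1) ∨ (y = 1 ∧ x ≠ 1) := by decide
  rw [← Set.ncard_coe_finset, ← Set.ncard_union_eq]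
  · congr 1
    ext e
    induction e with | _ a b =>
    simp only [Set.mem_union, Set.mem_ofPred_eq, Finset.mem_coe, mem_ncut, SimpleGraph.mem_edgeSet]
    constructor
    · rintro (h | h) <;> exact h.1
    · intro h
      by_cases hf : f a = f b
      · exact Or.inr ⟨h, hf⟩
      · left
        refine ⟨h, ?_⟩
        rcases hne _ _ hf with h1 | h1
        · exact ⟨a, b, rfl, h1⟩
        · exact ⟨b, a, Sym2.eq_swap, h1⟩
  · rw [Set.disjoint_left]
    rintro e ⟨h1, u, v, rfl, hu, hv⟩ h2
    simp only [Finset.mem_coe, mem_ncut, Set.mem_ofPred_eq] at h2 hu hv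
    rw [← h2.2] at hv; exact hv hu

end GraphPart

section Final

lemma upper_step {V X : Type*} [Fintype V] [DecidableEq V] [AddCommGroup X] [Finite X]
    [Module (ZMod 2) X] (G : SimpleGraph V) (f : V → ZMod 2) (M : Set X)
    (R : Finset V) (r : V → V)
    (hr1 : ∀ u v, G.Adj u v → f u = f v → r u = r v ∧ ((u ∈ R ∧ v ∉ R) ∨ (u ∉ R ∧ v ∈ R)))
    (hr2 : ∀ v, f (r v) = f v)
    (hr4 : ∀ v ∉ R, ∀ w ∉ R, r v = r w → v = w)
    (P : Submodule (ZMod 2) X) (q : X) (hq : q ∉ P)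
    (δ : ℝ) (hδ : 0 ≤ δ) (hP : ({y : P | q + y ∉ M}.ncard : ℝ) ≤ δ * Nat.card P)
    (h3 : (Fintype.card V : ℝ) ^ 2 * δ + 2 ^ Fintype.card V / Nat.card P < 1)
    (b : R → X) (hb : LinearIndependent (ZMod 2) b) (hbM : ∀ v, b v ∈ M) (hbP : ∀ v, b v ∈ P) :
    HasRestriction (cycleMatroid G) M := by
  have hz2 : ∀ x : X, x + x = 0 := by
    intro x; rw [← two_smul (ZMod 2) x, show (2 : ZMod 2) = 0 from rfl, zero_smul]
  set bb : V → X := fun v => if h : v ∈ R then b ⟨v, h⟩ else 0 with hbb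
  have bbP : ∀ v, bb v ∈ P := by
    intro v
    simp only [hbb]
    split_ifs with h
    · exact hbP _
    · exact P.zero_mem
  have bbM : ∀ v ∈ R, bb v ∈ M := by
    intro v h
    simp only [hbb, dif_pos h]; exact hbM _
  have bb0 : ∀ v ∉ R, bb v = 0 := by
    intro v h
    simp only [hbb, dif_neg h]
  refine embed G M P r (fun v => f v • q + bb v) δ ?_ ?_ hδ h3
  · intro u v huv
    have e : f u • q + bb u + (f v • q + bb v) = (f u + f v) • q + (bb u + bb v) := by
      rw [add_smul]; abel
    simp only [e]
    by_cases h : f u = f v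
    · left
      obtain ⟨h1, h2⟩ := hr1 u v huv h
      refine ⟨h1, ?_⟩
      rw [h, show f v + f v = 0 from CharTwo.add_self_eq_zero _, zero_smul, zero_add]
      rcases h2 with h2 | h2
      · rw [bb0 v h2.2, add_zero]; exact bbM u h2.1
      · rw [bb0 u h2.1, zero_add]; exact bbM v h2.2
    · right
      refine ⟨fun h' => h ?_, ?_⟩
      · rw [← hr2 u, h', hr2]
      · have : f u + f v = 1 := by
          have : ∀ x y : ZMod 2, x ≠ y → x + y = 1 := by decide
          exact this _ _ h
        rw [this, one_smul]
        refine le_trans (le_of_eq ?_) hP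
        congr 1
        set z : P := ⟨bb u + bb v, P.add_mem (bbP u) (bbP v)⟩ with hz
        have : {y : P | q + (bb u + bb v) + y ∉ M} = (fun y => z + y) ⁻¹' {y : P | q + y ∉ M} := by
          ext y
          simp only [Set.mem_ofPred_eq, Set.mem_preimage, Submodule.coe_add, hz, add_assoc]
        rw [this]
        refine Set.ncard_preimage_of_injective_subset_range (add_right_injective z) ?_
        intro y _
        exact ⟨-z + y, by simp⟩
  · intro c hc1 hc2
    have e : ∑ v, c v • (f v • q + bb v) = (∑ v, c v * f v) • q + ∑ v, c v • bb v := by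
      simp only [smul_add, Finset.sum_add_distrib, smul_smul, Finset.sum_smul]
    rw [e] at hc2
    have hsP : ∑ v, c v • bb v ∈ P := P.sum_mem fun v _ => P.smul_mem _ (bbP v)
    have h0 : ∑ v, c v * f v = 0 := by
      rcases zmod_two_cases (∑ v, c v * f v) with h | h
      · exact h
      · exfalso
        rw [h, one_smul] at hc2
        apply hq
        rw [eq_neg_of_add_eq_zero_left hc2]
        exact P.neg_mem hsP
    rw [h0, zero_smul, zero_add] at hc2
    have hcR : ∀ v ∈ R, c v = 0 := by
      have : ∑ v : R, c v • b v = 0 := by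
        rw [← hc2, ← Finset.sum_subset (Finset.subset_univ R) (fun v _ h => by rw [bb0 v h, smul_zero]),
          ← Finset.sum_coe_sort R]
        refine Finset.sum_congr rfl fun v _ => ?_
        simp [hbb]
      intro v hv
      exact Fintype.linearIndependent_iff.1 hb (fun v => c v) this ⟨v, hv⟩
    funext v
    by_cases hv : v ∈ R
    · exact hcR v hv
    · have := hc1 (r v)
      rw [Finset.sum_eq_single v] at this
      · exact this
      · intro w hw hwv
        by_cases hwR : w ∈ R
        · exact hcR w hwR
        · exact absurd (hr4 w hwR v hv (Finset.mem_filter.1 hw).2) hwv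
      · simp

lemma indep_of_card {X : Type*} [AddCommGroup X] [Finite X] [Module (ZMod 2) X] (S : Set X)
    (h0 : (0 : X) ∉ S) (ν : ℕ) (hν : 0 < ν) (hS : 2 ^ (ν - 1) ≤ S.ncard) {ι : Type*} [Fintype ι]
    (hι : Fintype.card ι = ν) :
    ∃ b : ι → X, LinearIndependent (ZMod 2) b ∧ ∀ i, b i ∈ S := by
  obtain ⟨B, hBS, hBsp, hB⟩ := exists_linearIndependent (ZMod 2) S
  have := Fintype.ofFinite B
  have h1 : (insert 0 S).ncard ≤ Nat.card (Submodule.span (ZMod 2) S) := by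
    rw [← SetLike.coe_sort_coe, Nat.card_coe_set_eq]
    refine Set.ncard_le_ncard ?_ (Set.toFinite _)
    exact Set.insert_subset (Submodule.zero_mem _) Submodule.subset_span
  rw [Set.ncard_insert_of_notMem h0, Module.natCard_eq_pow_finrank (K := ZMod 2),
    ← hBsp] at h1
  have hf : Module.finrank (ZMod 2) (Submodule.span (ZMod 2) B) = Fintype.card B := by
    have := finrank_span_eq_card hB
    rwa [Subtype.range_coe] at this
  rw [hf, Nat.card_eq_fintype_card, ZMod.card] at h1
  have h2 : ν - 1 < Fintype.card B := (Nat.pow_lt_pow_iff_right (a := 2) (by norm_num)).1 (by omega)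
  have h3 : Fintype.card ι ≤ Fintype.card B := by omega
  obtain ⟨e⟩ := Function.Embedding.nonempty_of_card_le h3
  exact ⟨fun i => (e i : X), hB.comp e e.injective, fun i => hBS (e i).2⟩

lemma lower_part {V : Type*} [Fintype V] [DecidableEq V] (G : SimpleGraph V) [DecidableRel G.Adj]
    (hreg : G.IsRegularOfDegree 3) (ν : ℕ) (hν : ∀ f, ν ≤ (ncut G f).card) (hν0 : 0 < ν)
    (n : ℕ) (hn : ν ≤ n) :
    ∃ M : Set (Fin n → ZMod 2), 0 ∉ M ∧ ¬ HasRestriction (cycleMatroid G) M ∧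
      M.ncard = 2 ^ (n - 1) + 2 ^ (ν - 1) - 1 := by
  have hn0 : 0 < n := by omega
  let π : (Fin n → ZMod 2) →ₗ[ZMod 2] ZMod 2 := LinearMap.proj ⟨0, hn0⟩
  have hπs : Function.Surjective π := by
    intro z; exact ⟨fun _ => z, rfl⟩
  have hker : Module.finrank (ZMod 2) (LinearMap.ker π) = n - 1 := by
    have := LinearMap.finrank_range_add_finrank_ker π
    rw [LinearMap.range_eq_top.2 hπs, finrank_top, Module.finrank_self, Module.finrank_fin_fun] at this
    omega
  obtain ⟨Z, hZk, hZf⟩ : ∃ Z : Submodule (ZMod 2) (Fin n → ZMod 2), Z ≤ LinearMap.ker π ∧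
      Module.finrank (ZMod 2) Z = ν - 1 := by
    obtain ⟨b, hb⟩ := exists_linearIndependent_of_le_finrank (R := ZMod 2) (M := LinearMap.ker π) (n := ν - 1) (by omega)
    refine ⟨(Submodule.span (ZMod 2) (Set.range b)).map (LinearMap.ker π).subtype, Submodule.map_subtype_le _ _, ?_⟩
    rw [Submodule.finrank_map_subtype_eq, finrank_span_eq_card hb, Fintype.card_fin]
  have hcard : ∀ P : Submodule (ZMod 2) (Fin n → ZMod 2), (P : Set (Fin n → ZMod 2)).ncard = 2 ^ Module.finrank (ZMod 2) P := by
    intro P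
    have := Module.natCard_eq_pow_finrank (K := ZMod 2) (V := P)
    rw [← Nat.card_coe_set_eq]
    simpa [ZMod.card] using this
  refine ⟨(LinearMap.ker π : Set (Fin n → ZMod 2))ᶜ ∪ ((Z : Set (Fin n → ZMod 2)) \ {0}), ?_, ?_, ?_⟩
  · simp
  · rintro ⟨ψ, hψ, hM⟩
    have key : ∀ u v, G.Adj u v → π (ψ (Pi.single u 1)) = π (ψ (Pi.single v 1)) →
        (Pi.single u 1 + Pi.single v 1 : V → ZMod 2) ∈ Z.comap ψ := by
      intro u v huv h
      have := hM ⟨_, ⟨u, v, huv, rfl⟩, rfl⟩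
      rcases this with h' | h'
      · exfalso
        apply h'
        rw [SetLike.mem_coe, LinearMap.mem_ker, map_add, map_add, h]
        exact CharTwo.add_self_eq_zero _
      · exact h'.1
    have h1 := rank_bound G hreg ν hν _ (fun v => π (ψ (Pi.single v 1))) (Z.comap ψ) rfl key
    have h2 : Module.finrank (ZMod 2) (Z.comap ψ) ≤ Module.finrank (ZMod 2) Z := by
      refine LinearMap.finrank_le_finrank_of_injective
        (f := (ψ.restrict (p := Z.comap ψ) (q := Z) (fun x hx => hx))) ?_
      intro x y hxy
      apply Subtype.ext
      apply hψ
      exact congrArg Subtype.val hxy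
    omega
  · rw [Set.ncard_union_eq, Set.ncard_sdiff_singleton_of_mem Z.zero_mem, hcard, hZf, Set.ncard_compl, hcard, hker]
    · rw [Nat.card_eq_fintype_card]
      simp only [Fintype.card_fun, ZMod.card, Fintype.card_fin]
      have : 2 ^ n = 2 ^ (n - 1) * 2 := by rw [← pow_succ]; congr 1; omega
      have := Nat.one_le_two_pow (n := ν - 1)
      omega
    · rw [Set.disjoint_left]
      intro x hx hx'
      exact hx (hZk hx'.1)

lemma upper_part {V : Type*} [Fintype V] [DecidableEq V] (G : SimpleGraph V)
    (f : V → ZMod 2) (hm : ∀ v u w, G.Adj v u → G.Adj v w → f u = f v → f w = f v → u = w)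
    (ν : ℕ) (hν : (ncut G f).card = ν) (hν0 : 0 < ν) :
    ∃ n₀ : ℕ, ∀ n ≥ n₀, ∀ M : Set (Fin n → ZMod 2), 0 ∉ M → ¬ HasRestriction (cycleMatroid G) M →
      M.ncard ≤ 2 ^ (n - 1) + 2 ^ (ν - 1) - 1 := by
  obtain ⟨R, r, hRc, hr1, hr2, hr3, hr4, -⟩ := match_struct G f hm
  set k := Fintype.card V with hk
  set δ : ℝ := 1 / (8 * (k + 1) ^ 2) with hδ
  have hk0 : (0 : ℝ) ≤ k := Nat.cast_nonneg k
  have hδ0 : 0 < δ := by positivity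
  have hδ1 : δ ≤ 1 / 8 := by
    rw [hδ, div_le_div_iff₀ (by positivity) (by norm_num)]; nlinarith
  have hδ2 : (k : ℝ) ^ 2 * δ ≤ 1 / 8 := by
    rw [hδ, mul_one_div, div_le_div_iff₀ (by positivity) (by norm_num)]; nlinarith
  obtain ⟨N0, hN0⟩ := stab G f (fun v => if v ∈ R then 1 else 0) (by
    intro u v huv
    by_cases h : f u = f v
    · right
      rcases (hr1 u v huv h).2 with h' | h' <;> simp [h'.1, h'.2]
    · left; exact h) δ hδ0 hδ1 hδ2
  refine ⟨N0 + k + 2, fun n hn M h0 hM => ?_⟩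
  by_contra hlt
  have hcX : Nat.card (Fin n → ZMod 2) = 2 ^ n := by
    rw [Nat.card_eq_fintype_card]; simp [ZMod.card]
  have hn1 : 2 ^ n = 2 ^ (n - 1) * 2 := by rw [← pow_succ]; congr 1; omega
  have hν1 := Nat.one_le_two_pow (n := ν - 1)
  obtain ⟨P, q, hq, hPc, hPM⟩ := hN0 (Fin n → ZMod 2)
    (by rw [hcX]; have := Nat.lt_two_pow_self (n := n); omega) M (by rw [hcX]; omega) hM
  rw [hcX] at hPc
  have hPc' : Nat.card P = 2 ^ (n - 1) := by omega
  have hMP : 2 ^ (ν - 1) ≤ (M ∩ P).ncard := by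
    have h1 := Set.ncard_inter_add_ncard_sdiff_eq_ncard M (P : Set (Fin n → ZMod 2)) (Set.toFinite _)
    have h2 : (M \ P).ncard ≤ ((P : Set (Fin n → ZMod 2))ᶜ).ncard :=
      Set.ncard_le_ncard (fun x hx => hx.2) (Set.toFinite _)
    rw [Set.ncard_compl, hcX, show (P : Set (Fin n → ZMod 2)).ncard = 2 ^ (n - 1) from hPc'] at h2
    omega
  obtain ⟨b, hb, hbMP⟩ := indep_of_card (M ∩ P) (fun h => h0 h.1) ν hν0 hMP (ι := R) (by
    rw [Fintype.card_coe, hRc, hν])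
  refine hM (upper_step G f M R r hr1 hr2 hr4 P q hq (3 * δ) (by positivity) hPM ?_ b hb
    (fun v => (hbMP v).1) (fun v => (hbMP v).2))
  have h5 : (2 : ℝ) ^ Fintype.card V / Nat.card P ≤ 1 / 2 := by
    rw [hPc', Nat.cast_pow, Nat.cast_ofNat, div_le_div_iff₀ (by positivity) (by norm_num), one_mul, ← pow_succ]
    exact pow_le_pow_right₀ (by norm_num) (by omega)
  have : (k : ℝ) ^ 2 * (3 * δ) = 3 * ((k : ℝ) ^ 2 * δ) := by ring
  rw [← hk] at *
  linarith

end Final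

/-- Exact Turán numbers for cycle matroids of nonbipartite cubic graphs:
`ν = |E(G)| − c` where `c` is the maximum size of a cut. -/
theorem cubic_exact {V : Type*} [Fintype V] [DecidableEq V] (G : SimpleGraph V)
    [DecidableRel G.Adj]
    (hreg : G.IsRegularOfDegree 3) (hnb : ¬ G.Colorable 2) (c : ℕ)
    (hc : IsGreatest {m : ℕ | ∃ S : Set V,
      m = {e : Sym2 V | e ∈ G.edgeSet ∧ ∃ u v, e = s(u, v) ∧ u ∈ S ∧ v ∉ S}.ncard} c) :
    ∃ n₀ : ℕ, ∀ n ≥ n₀,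
      exNum (cycleMatroid G) n = 2 ^ (n - 1) + 2 ^ (G.edgeSet.ncard - c - 1) - 1 := by
  have hν : ∀ f, G.edgeSet.ncard - c ≤ (ncut G f).card := by
    intro f
    have h1 := cut_ncut G f
    have h2 := hc.2 ⟨{v | f v = 1}, rfl⟩
    omega
  obtain ⟨S, hS⟩ := hc.1
  obtain ⟨f, hf⟩ : ∃ f : V → ZMod 2, (ncut G f).card = G.edgeSet.ncard - c := by
    refine ⟨fun v => if v ∈ S then 1 else 0, ?_⟩
    have h1 := cut_ncut G (fun v => if v ∈ S then 1 else 0)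
    have h2 : {v : V | (if v ∈ S then (1 : ZMod 2) else 0) = 1} = S := by
      ext v; simp
    rw [h2, ← hS] at h1
    omega
  set ν := G.edgeSet.ncard - c with hνd
  have hν0 : 0 < ν := by
    rw [Nat.pos_iff_ne_zero]
    intro h
    rw [h, Finset.card_eq_zero] at hf
    apply hnb
    refine ⟨SimpleGraph.Coloring.mk (α := Fin 2) f ?_⟩
    intro u v huv he
    have : s(u, v) ∈ ncut G f := (mem_ncut G f u v).2 ⟨huv, he⟩
    rw [hf] at this
    simp at this
  have hm : ∀ v u w, G.Adj v u → G.Adj v w → f u = f v → f w = f v → u = w := by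
    intro v u w hu hw hfu hfw
    by_contra huw
    have h1 := (flip_facts G hreg f v u w hu hw huw hfu hfw).1
    have h2 := hν (Function.update f v (f v + 1))
    omega
  obtain ⟨n₀, hn₀⟩ := upper_part G f hm ν hf hν0
  refine ⟨n₀ + ν, fun n hn => ?_⟩
  refine IsGreatest.csSup_eq ⟨lower_part G hreg ν hν hν0 n (by omega), ?_⟩
  rintro m ⟨M, h0, hM, rfl⟩
  exact hn₀ n (by omega) M h0 hM
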